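/- Let (H, μ, Δ, α, R) be a cobraided Hom-bialgebra over a commutative ring k. Then for each integer n ≥ 0, H^n = (H, μ^(n), Δ^(n), α^(2^n), R), where μ^(n) = α^(2^n − 1) ∘ μ and Δ^(n) = Δ ∘ α^(2^n − 1), is again a cobraided Hom-bialgebra; in particular R satisfies the three cobraiding axioms with respect to μ^(n), Δ^(n), and α^(2^n). -/

import Mathlib

/-!
Twisting by a self-map. Let `a` be a linear map with `a (x y) = (a x) (a y)`,
`(a ⊗ a) ∘ Δ = Δ ∘ a` and `a ∘ α = α ∘ a`. Then `(H, a ∘ μ, Δ ∘ a, α ∘ a, R)` is again a cobraided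
Hom-bialgebra (`IsCobraided.twist`), and no compatibility between `R` and `a` is needed: the first
two cobraiding axioms for the twist are the original axioms evaluated at `(a x, a y, a z)`, and the
third is the original one evaluated at `(a x, a y)`, with `a` applied to both sides. The theorem is
the case `a = α ^ (2 ^ n - 1)`, where `α ∘ a = α ^ (2 ^ n)`.
-/

open TensorProduct LinearMap

variable {k : Type*} [CommRing k]

/-- `(A, μ, α)` is a Hom-associative algebra: `α` is multiplicative with respect to the
k-bilinear multiplication `μ`, and `μ` is Hom-associative. -/
def IsHomAssoc {A : Type*} [AddCommGroup A] [Module k A]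
    (μ : A →ₗ[k] A →ₗ[k] A) (α : A →ₗ[k] A) : Prop :=
  (∀ x y, α (μ x y) = μ (α x) (α y)) ∧
  (∀ x y z, μ (α x) (μ y z) = μ (μ x y) (α z))

/-- `(C, Δ, α)` is a Hom-coassociative coalgebra: `(α ⊗ α) ∘ Δ = Δ ∘ α` and
`(α ⊗ Δ) ∘ Δ = (Δ ⊗ α) ∘ Δ` (up to the associator of the tensor product). -/
def IsHomCoassoc {C : Type*} [AddCommGroup C] [Module k C]
    (Δ : C →ₗ[k] C ⊗[k] C) (α : C →ₗ[k] C) : Prop :=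
  (TensorProduct.map α α ∘ₗ Δ = Δ ∘ₗ α) ∧
  (TensorProduct.map α Δ ∘ₗ Δ =
    (TensorProduct.assoc k C C C).toLinearMap ∘ₗ (TensorProduct.map Δ α ∘ₗ Δ))

/-- `(H, μ, Δ, α)` is a Hom-bialgebra: a Hom-associative algebra and a Hom-coassociative
coalgebra such that `Δ ∘ μ = (μ ⊗ μ) ∘ (Id ⊗ τ ⊗ Id) ∘ (Δ ⊗ Δ)`, stated elementwise as
`Δ (μ x y) = map₂ μ μ (Δ x) (Δ y)`. -/
def IsHomBialgebra {H : Type*} [AddCommGroup H] [Module k H]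
    (μ : H →ₗ[k] H →ₗ[k] H) (Δ : H →ₗ[k] H ⊗[k] H) (α : H →ₗ[k] H) : Prop :=
  IsHomAssoc μ α ∧ IsHomCoassoc Δ α ∧
  ∀ x y, Δ (μ x y) = TensorProduct.map₂ μ μ (Δ x) (Δ y)

/-- `(H, μ, Δ, α, R)` is a cobraided Hom-bialgebra: a Hom-bialgebra with a bilinear form
`R : H ⊗ H → k` satisfying `R ∘ (μ ⊗ α) = R^{⊗2} ∘ (2 3) ∘ (α^{⊗2} ⊗ Δ)`,
`R ∘ (α ⊗ μ) = R^{⊗2} ∘ (2 3 4) ∘ (Δ ⊗ α^{⊗2})`, and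
`(μ ⊗ R) ∘ (1 2 3) ∘ Δ^{⊗2} = (R ⊗ μ) ∘ (2 3) ∘ Δ^{⊗2}`. -/
def IsCobraided {H : Type*} [AddCommGroup H] [Module k H]
    (μ : H →ₗ[k] H →ₗ[k] H) (Δ : H →ₗ[k] H ⊗[k] H)
    (α : H →ₗ[k] H) (R : H ⊗[k] H →ₗ[k] k) : Prop :=
  IsHomBialgebra μ Δ α ∧
  (R ∘ₗ TensorProduct.map (TensorProduct.lift μ) α =
    LinearMap.mul' k k ∘ₗ TensorProduct.map R R ∘ₗ
      (TensorProduct.tensorTensorTensorComm k H H H H).toLinearMap ∘ₗ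
      TensorProduct.map (TensorProduct.map α α) Δ) ∧
  (R ∘ₗ TensorProduct.map α (TensorProduct.lift μ) =
    LinearMap.mul' k k ∘ₗ TensorProduct.map R R ∘ₗ
      (TensorProduct.tensorTensorTensorComm k H H H H).toLinearMap ∘ₗ
      TensorProduct.map LinearMap.id (TensorProduct.comm k H H).toLinearMap ∘ₗ
      TensorProduct.map Δ (TensorProduct.map α α)) ∧
  ((TensorProduct.rid k H).toLinearMap ∘ₗ
      TensorProduct.map (TensorProduct.lift μ) R ∘ₗ
      TensorProduct.map (TensorProduct.comm k H H).toLinearMap LinearMap.id ∘ₗ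
      (TensorProduct.tensorTensorTensorComm k H H H H).toLinearMap ∘ₗ
      TensorProduct.map Δ Δ =
    (TensorProduct.lid k H).toLinearMap ∘ₗ
      TensorProduct.map R (TensorProduct.lift μ) ∘ₗ
      (TensorProduct.tensorTensorTensorComm k H H H H).toLinearMap ∘ₗ
      TensorProduct.map Δ Δ)

theorem pow_map_mul {H : Type*} [AddCommGroup H] [Module k H]
    {μ : H →ₗ[k] H →ₗ[k] H} {α : H →ₗ[k] H} (h : ∀ x y, α (μ x y) = μ (α x) (α y)) (m : ℕ)
    (x y : H) : (α ^ m) (μ x y) = μ ((α ^ m) x) ((α ^ m) y) := by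
  induction m with
  | zero => rfl
  | succ m ih => simp only [pow_succ', Module.End.mul_apply, ih, h]

theorem pow_map_comul {H : Type*} [AddCommGroup H] [Module k H]
    {Δ : H →ₗ[k] H ⊗[k] H} {α : H →ₗ[k] H} (h : TensorProduct.map α α ∘ₗ Δ = Δ ∘ₗ α) (m : ℕ) :
    TensorProduct.map (α ^ m) (α ^ m) ∘ₗ Δ = Δ ∘ₗ (α ^ m) := by
  induction m with
  | zero => simp [Module.End.one_eq_id]
  | succ m ih =>
    rw [pow_succ', Module.End.mul_eq_comp, TensorProduct.map_comp, LinearMap.comp_assoc, ih,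
      ← LinearMap.comp_assoc, h, LinearMap.comp_assoc]

theorem lift_compr₂_eq {H : Type*} [AddCommGroup H] [Module k H]
    (μ : H →ₗ[k] H →ₗ[k] H) (a : H →ₗ[k] H) :
    TensorProduct.lift (μ.compr₂ a) = a ∘ₗ TensorProduct.lift μ := by
  ext x y
  simp

theorem comp_lift_of_map_mul {H : Type*} [AddCommGroup H] [Module k H]
    {μ : H →ₗ[k] H →ₗ[k] H} {a : H →ₗ[k] H} (h : ∀ x y, a (μ x y) = μ (a x) (a y)) :
    a ∘ₗ TensorProduct.lift μ = TensorProduct.lift μ ∘ₗ TensorProduct.map a a := by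
  ext x y
  simp [h]

theorem map₂_compr₂_apply {H : Type*} [AddCommGroup H] [Module k H]
    (μ : H →ₗ[k] H →ₗ[k] H) (a : H →ₗ[k] H) (s t : H ⊗[k] H) :
    TensorProduct.map₂ (μ.compr₂ a) (μ.compr₂ a) s t =
      TensorProduct.map a a (TensorProduct.map₂ μ μ s t) := by
  induction s with
  | zero => simp
  | add s s' hs hs' => simp only [map_add, LinearMap.add_apply, hs, hs']
  | tmul x y =>
    induction t with
    | zero => simp
    | add t t' ht ht' => simp only [map_add, ht, ht']
    | tmul z w => simp

/-- Twisting a cobraided Hom-bialgebra by a map `a` compatible with `μ`, `Δ` and `α`. -/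
theorem IsCobraided.twist {H : Type*} [AddCommGroup H] [Module k H]
    {μ : H →ₗ[k] H →ₗ[k] H} {Δ : H →ₗ[k] H ⊗[k] H} {α : H →ₗ[k] H}
    {R : H ⊗[k] H →ₗ[k] k} (h : IsCobraided μ Δ α R) {a : H →ₗ[k] H}
    (hμ : ∀ x y, a (μ x y) = μ (a x) (a y))
    (hΔ : TensorProduct.map a a ∘ₗ Δ = Δ ∘ₗ a) (hα : a ∘ₗ α = α ∘ₗ a) :
    IsCobraided (μ.compr₂ a) (Δ ∘ₗ a) (α ∘ₗ a) R := by
  obtain ⟨⟨⟨hm, ha⟩, ⟨hc, hca⟩, hb⟩, h1, h2, h3⟩ := h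
  have hα' : ∀ x, a (α x) = α (a x) := fun x => LinearMap.congr_fun hα x
  refine ⟨⟨⟨?_, ?_⟩, ⟨?_, ?_⟩, ?_⟩, ?_, ?_, ?_⟩
  · intro x y
    simp [hm, hμ, hα']
  · intro x y z
    simp [hμ, hα', ha]
  · refine LinearMap.ext fun x => ?_
    have hΔ' : ∀ x, TensorProduct.map a a (Δ x) = Δ (a x) := fun x => LinearMap.congr_fun hΔ x
    have hc' : ∀ x, TensorProduct.map α α (Δ x) = Δ (α x) := fun x => LinearMap.congr_fun hc x
    simp only [TensorProduct.map_comp, LinearMap.comp_apply, hΔ', hc', hα']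
  · have key : TensorProduct.map a a ∘ₗ Δ ∘ₗ a = Δ ∘ₗ a ∘ₗ a := by
      rw [← LinearMap.comp_assoc, hΔ, LinearMap.comp_assoc]
    rw [TensorProduct.map_comp, TensorProduct.map_comp, LinearMap.comp_assoc,
      LinearMap.comp_assoc, key, ← LinearMap.comp_assoc _ Δ, hca,
      ← LinearMap.comp_assoc _ Δ (TensorProduct.map Δ α)]
    rfl
  · intro x y
    rw [map₂_compr₂_apply, LinearMap.comp_apply, LinearMap.comp_apply, LinearMap.comp_apply, ← hb,
      ← hμ, LinearMap.compr₂_apply]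
    exact (LinearMap.congr_fun hΔ _).symm
  · rw [lift_compr₂_eq, comp_lift_of_map_mul hμ, TensorProduct.map_comp, ← LinearMap.comp_assoc,
      h1, TensorProduct.map_comp α α, TensorProduct.map_comp (TensorProduct.map α α)]
    rfl
  · rw [lift_compr₂_eq, comp_lift_of_map_mul hμ, TensorProduct.map_comp, ← LinearMap.comp_assoc,
      h2, TensorProduct.map_comp α α, TensorProduct.map_comp Δ]
    rfl
  · have hr : (TensorProduct.rid k H).toLinearMap ∘ₗ TensorProduct.map (a ∘ₗ TensorProduct.lift μ) R
        = a ∘ₗ (TensorProduct.rid k H).toLinearMap ∘ₗ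
          TensorProduct.map (TensorProduct.lift μ) R := by
      ext; simp
    have hl : (TensorProduct.lid k H).toLinearMap ∘ₗ TensorProduct.map R (a ∘ₗ TensorProduct.lift μ)
        = a ∘ₗ (TensorProduct.lid k H).toLinearMap ∘ₗ
          TensorProduct.map R (TensorProduct.lift μ) := by
      ext; simp
    rw [lift_compr₂_eq, ← LinearMap.comp_assoc, hr, ← LinearMap.comp_assoc _ _
      (TensorProduct.lid k H).toLinearMap, hl, TensorProduct.map_comp Δ]
    exact congrArg (fun f => a ∘ₗ f ∘ₗ TensorProduct.map a a) h3

/-- If `(H, μ, Δ, α, R)` is a cobraided Hom-bialgebra, then for each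
`n ≥ 0` the `n`-th derived tuple `Hⁿ = (H, μ⁽ⁿ⁾, Δ⁽ⁿ⁾, α^(2ⁿ), R)` is again a cobraided
Hom-bialgebra. -/
theorem derived_cobraided {H : Type*} [AddCommGroup H] [Module k H]
    (μ : H →ₗ[k] H →ₗ[k] H) (Δ : H →ₗ[k] H ⊗[k] H) (α : H →ₗ[k] H)
    (R : H ⊗[k] H →ₗ[k] k)
    (h : IsCobraided μ Δ α R) :
    ∀ n : ℕ, IsCobraided (μ.compr₂ (α ^ (2 ^ n - 1))) (Δ ∘ₗ (α ^ (2 ^ n - 1)))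
      (α ^ (2 ^ n)) R := by
  intro n
  have hpow : α ^ (2 ^ n) = α ∘ₗ α ^ (2 ^ n - 1) := by
    rw [← Module.End.mul_eq_comp, ← pow_succ', Nat.sub_add_cancel Nat.one_le_two_pow]
  rw [hpow]
  refine h.twist (pow_map_mul h.1.1.1 _) (pow_map_comul h.1.2.1.1 _) ?_
  rw [← Module.End.mul_eq_comp, ← Module.End.mul_eq_comp, ← pow_succ, ← pow_succ']
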